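/- (Entropy stability of the switched high-order dissipation.) Let R be a 5×5 real matrix, let V_jump ∈ ℝ⁵, set w := Rᵀ·V_jump, let w̃ ∈ ℝ⁵ be arbitrary (the reconstructed jump), and let α ≥ 0. Define the diagonal matrix S with entries S_l := 1 if w̃_l and w_l have the same sign and both are nonzero (sign(w̃_l) = sign(w_l) ≠ 0), and S_l := 0 otherwise. Then V_jump · (½·α·R·S·w̃) = ½·α·Σ_l S_l·w_l·w̃_l ≥ 0. Consequently, for two states L, R with jump of entropy variables [V] = V_jump, if F̃ satisfies the entropy conservation condition, then the flux F̂ := F̃ − ½·α·R·S·w̃ satisfies the entropy stability inequality [V]·F̂ − [ψ₁] + [Φ]⟨hBx⟩ − g[h·b·vx] + g[h·vx]⟨b⟩ ≤ 0. -/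

import Mathlib

open scoped BigOperators
noncomputable section
open Matrix

/-- A state of the 1D (x-split) shallow water MHD system together with
the bottom topography value `b`. -/
structure SWState where
  h : ℝ
  vx : ℝ
  vy : ℝ
  Bx : ℝ
  By : ℝ
  b : ℝ

namespace SWMHD

/-- Mean `⟨a⟩ = (a_L + a_R)/2` of an expression in the state variables. -/
def amean (f : SWState → ℝ) (L R : SWState) : ℝ := (f L + f R) / 2

/-- Jump `[a] = a_R − a_L` of an expression in the state variables. -/
def ajump (f : SWState → ℝ) (L R : SWState) : ℝ := f R - f L

/-- Entropy variables `V`. -/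
def entropyVars (g : ℝ) (U : SWState) : Fin 5 → ℝ :=
  ![g * (U.h + U.b) - (U.vx ^ 2 + U.vy ^ 2 + U.Bx ^ 2 + U.By ^ 2) / 2,
    U.vx, U.vy, U.Bx, U.By]

/-- Jump of the entropy variables. -/
def vjump (g : ℝ) (L R : SWState) : Fin 5 → ℝ :=
  fun k => entropyVars g R k - entropyVars g L k

/-- Entropy potential `ψ₁ = ½ g h² vx`. -/
def psi1 (g : ℝ) (U : SWState) : ℝ := g * U.h ^ 2 * U.vx / 2

/-- `Φ = vx Bx + vy By`. -/
def Phi (U : SWState) : ℝ := U.vx * U.Bx + U.vy * U.By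

/-- The physical flux `F₁` of the x-split system. -/
def physFlux (g : ℝ) (U : SWState) : Fin 5 → ℝ :=
  ![U.h * U.vx,
    U.h * U.vx ^ 2 - U.h * U.Bx ^ 2 + g * U.h ^ 2 / 2,
    U.h * U.vx * U.vy - U.h * U.Bx * U.By,
    0,
    U.h * (U.vx * U.By - U.Bx * U.vy)]

/-- The physical entropy flux `q₁`. -/
def q1 (g : ℝ) (U : SWState) : ℝ :=
  ((U.vx ^ 2 + U.vy ^ 2 + U.Bx ^ 2 + U.By ^ 2) / 2 + g * U.h + g * U.b) * U.h * U.vx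
    - U.h * U.Bx * (U.vx * U.Bx + U.vy * U.By)

/-- The entropy conservative (EC) two-point flux `F̃₁(L,R)`. -/
def ecFlux (g : ℝ) (L R : SWState) : Fin 5 → ℝ :=
  ![amean (fun U => U.h) L R * amean (fun U => U.vx) L R,
    amean (fun U => U.h) L R * (amean (fun U => U.vx) L R) ^ 2
      + g / 2 * amean (fun U => U.h ^ 2) L R
      - amean (fun U => U.h * U.Bx) L R * amean (fun U => U.Bx) L R
      + g * (amean (fun U => U.h * U.b) L R
             - amean (fun U => U.h) L R * amean (fun U => U.b) L R),
    amean (fun U => U.h) L R * amean (fun U => U.vx) L R * amean (fun U => U.vy) L R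
      - amean (fun U => U.h * U.Bx) L R * amean (fun U => U.By) L R,
    amean (fun U => U.h) L R * amean (fun U => U.vx) L R * amean (fun U => U.Bx) L R
      - amean (fun U => U.h * U.Bx) L R * amean (fun U => U.vx) L R,
    amean (fun U => U.h) L R * amean (fun U => U.vx) L R * amean (fun U => U.By) L R
      - amean (fun U => U.h * U.Bx) L R * amean (fun U => U.vy) L R]

/-- The entropy conservation condition `[V]·F = [ψ₁] − [Φ]⟨hBx⟩ + g[h b vx] − g[h vx]⟨b⟩`
for a two-point numerical flux `F`. -/
def ecCondition (g : ℝ) (F : Fin 5 → ℝ) (L R : SWState) : Prop :=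
  vjump g L R ⬝ᵥ F
    = ajump (psi1 g) L R
      - ajump Phi L R * amean (fun U => U.h * U.Bx) L R
      + g * ajump (fun U => U.h * U.b * U.vx) L R
      - g * ajump (fun U => U.h * U.vx) L R * amean (fun U => U.b) L R

/-- The numerical entropy flux `q̃` built from a two-point flux value `F`. -/
def numEntropyFlux (g : ℝ) (F : Fin 5 → ℝ) (L R : SWState) : ℝ :=
  (fun k => (entropyVars g L k + entropyVars g R k) / 2) ⬝ᵥ F
    + amean Phi L R * amean (fun U => U.h * U.Bx) L R
    - amean (psi1 g) L R
    + g * amean (fun U => U.h * U.vx) L R * amean (fun U => U.b) L R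
    - g * amean (fun U => U.h * U.b * U.vx) L R

/-- Conservative variables `U = (h, h vx, h vy, h Bx, h By)`. -/
def consVar (U : SWState) : Fin 5 → ℝ :=
  ![U.h, U.h * U.vx, U.h * U.vy, U.h * U.Bx, U.h * U.By]

/-- The source vector `Ψ = (0,0,0,vx,vy)`. -/
def PsiVec (U : SWState) : Fin 5 → ℝ := ![0, 0, 0, U.vx, U.vy]

/-- The bottom-topography source vector `G₁ = (0, g h, 0, 0, 0)`. -/
def G1Vec (g : ℝ) (U : SWState) : Fin 5 → ℝ := ![0, g * U.h, 0, 0, 0]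

/-- The mathematical entropy (total energy). -/
def entropyFn (g : ℝ) (U : SWState) : ℝ :=
  U.h * (U.vx ^ 2 + U.vy ^ 2 + U.Bx ^ 2 + U.By ^ 2) / 2 + g * U.h ^ 2 / 2 + g * U.h * U.b

end SWMHD

open SWMHD

/-! Moving `R` across the dot product gives `V · (½ α R S w̃) = ½ α ∑ S_l w_l w̃_l` with
`w = Rᵀ V`, so subtracting this dissipation from a flux lowers its entropy production by exactly
that sum. The sum is nonnegative for every switch with `S_l w_l w̃_l ≥ 0`, and the sign switch has
this property because it only lets through pairs of equal nonzero sign. -/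

theorem dotProduct_mulVec_mul {m n A : Type*} [Fintype m] [Fintype n] [NonUnitalCommSemiring A]
    (v : m → A) (M : Matrix m n A) (s u : n → A) :
    v ⬝ᵥ M *ᵥ (s * u) = ∑ l, s l * (Mᵀ *ᵥ v) l * u l := by
  rw [dotProduct_mulVec]
  exact Finset.sum_congr rfl fun l _ => by
    rw [← mulVec_transpose, Pi.mul_apply, mul_left_comm, mul_assoc]

theorem mul_nonneg_of_sign_eq {a b : ℝ} (h : Real.sign a = Real.sign b) : 0 ≤ a * b := by
  rcases eq_or_ne b 0 with rfl | hb
  · exact (mul_zero a).ge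
  have hsq : Real.sign b * Real.sign b = 1 := by
    rcases Real.sign_apply_eq_of_ne_zero b hb with hsign | hsign <;> norm_num [hsign]
  calc
    0 ≤ (Real.sign a * a) * (Real.sign b * b) :=
      mul_nonneg (Real.sign_mul_nonneg a) (Real.sign_mul_nonneg b)
    _ = (Real.sign b * Real.sign b) * (a * b) := by rw [h]; ring
    _ = a * b := by rw [hsq, one_mul]

namespace SWMHD

/-- The diagonal entry `S_l` of the sign switch, as a function of the reconstructed jump
`wtilde = w̃_l` and the jump `w = w_l`. -/
def signSwitch (wtilde w : ℝ) : ℝ :=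
  if Real.sign wtilde = Real.sign w ∧ Real.sign w ≠ 0 then 1 else 0

theorem signSwitch_mul_mul_nonneg (wtilde w : ℝ) : 0 ≤ signSwitch wtilde w * w * wtilde := by
  unfold signSwitch
  split_ifs with h
  · simpa only [one_mul] using mul_nonneg_of_sign_eq h.1.symm
  · simp only [zero_mul, le_refl]

/-- The entropy produced at the interface between `L` and `R` by the two-point flux value `F`: the
defect in the entropy conservation condition. The flux is entropy stable when it is `≤ 0`. -/
def entropyProduction (g : ℝ) (F : Fin 5 → ℝ) (L R : SWState) : ℝ :=
  vjump g L R ⬝ᵥ F - ajump (psi1 g) L R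
    + ajump Phi L R * amean (fun U => U.h * U.Bx) L R
    - g * ajump (fun U => U.h * U.b * U.vx) L R
    + g * ajump (fun U => U.h * U.vx) L R * amean (fun U => U.b) L R

theorem ecCondition_iff_entropyProduction_eq_zero {g : ℝ} {F : Fin 5 → ℝ} {L R : SWState} :
    ecCondition g F L R ↔ entropyProduction g F L R = 0 := by
  unfold ecCondition entropyProduction
  constructor <;> intro h <;> linarith

theorem entropyProduction_sub (g : ℝ) (F D : Fin 5 → ℝ) (L R : SWState) :
    entropyProduction g (F - D) L R = entropyProduction g F L R - vjump g L R ⬝ᵥ D := by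
  unfold entropyProduction
  rw [dotProduct_sub]
  ring

theorem ecCondition.entropyProduction_sub_nonpos {g : ℝ} {F D : Fin 5 → ℝ} {L R : SWState}
    (hF : ecCondition g F L R) (hD : 0 ≤ vjump g L R ⬝ᵥ D) :
    entropyProduction g (F - D) L R ≤ 0 := by
  rw [entropyProduction_sub, ecCondition_iff_entropyProduction_eq_zero.mp hF, zero_sub]
  exact neg_nonpos.mpr hD

end SWMHD

theorem switched_dissipation_entropy_stable_general {n : Type*} [Fintype n] (g α : ℝ) (hα : 0 ≤ α)
    (Rm : Matrix (Fin 5) n ℝ) (Vjump : Fin 5 → ℝ) (s wtilde : n → ℝ)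
    (hs : ∀ l, 0 ≤ s l * (Rmᵀ *ᵥ Vjump) l * wtilde l) :
    (Vjump ⬝ᵥ ((1 / 2 * α) • Rm *ᵥ (s * wtilde))
        = 1 / 2 * α * ∑ l, s l * (Rmᵀ *ᵥ Vjump) l * wtilde l
      ∧ 0 ≤ 1 / 2 * α * ∑ l, s l * (Rmᵀ *ᵥ Vjump) l * wtilde l)
    ∧ ∀ (L R : SWState) (Ftilde : Fin 5 → ℝ), vjump g L R = Vjump → ecCondition g Ftilde L R →
        entropyProduction g (Ftilde - (1 / 2 * α) • Rm *ᵥ (s * wtilde)) L R ≤ 0 := by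
  have hdot : Vjump ⬝ᵥ ((1 / 2 * α) • Rm *ᵥ (s * wtilde))
      = 1 / 2 * α * ∑ l, s l * (Rmᵀ *ᵥ Vjump) l * wtilde l := by
    rw [dotProduct_smul, dotProduct_mulVec_mul, smul_eq_mul]
  have hnonneg : 0 ≤ 1 / 2 * α * ∑ l, s l * (Rmᵀ *ᵥ Vjump) l * wtilde l :=
    mul_nonneg (by positivity) (Finset.sum_nonneg fun l _ => hs l)
  refine ⟨⟨hdot, hnonneg⟩, ?_⟩
  rintro L R Ftilde rfl hF
  exact hF.entropyProduction_sub_nonpos (hdot ▸ hnonneg)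

/-- entropy stability of the switched high-order dissipation.
With `w = Rᵀ·V_jump` and the diagonal switch `S` keeping only the components
where the reconstructed jump `w̃` has the same (nonzero) sign as `w`, the
dissipation contributes `½ α Σ S_l w_l w̃_l ≥ 0`, and consequently the flux
`F̂ = F̃ − ½ α R S w̃` is entropy stable whenever `F̃` satisfies the entropy
conservation condition. -/
theorem switched_dissipation_entropy_stable (g α : ℝ) (hα : 0 ≤ α)
    (Rm : Matrix (Fin 5) (Fin 5) ℝ) (Vjump wtilde : Fin 5 → ℝ) :
    (Vjump ⬝ᵥ (fun k => (1 / 2) * α *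
          Rm.mulVec (fun l =>
            (if Real.sign (wtilde l) = Real.sign (Rm.transpose.mulVec Vjump l) ∧
                Real.sign (Rm.transpose.mulVec Vjump l) ≠ 0 then (1 : ℝ) else 0) * wtilde l) k)
        = (1 / 2) * α * ∑ l,
            (if Real.sign (wtilde l) = Real.sign (Rm.transpose.mulVec Vjump l) ∧
                Real.sign (Rm.transpose.mulVec Vjump l) ≠ 0 then (1 : ℝ) else 0)
              * Rm.transpose.mulVec Vjump l * wtilde l
      ∧ 0 ≤ (1 / 2) * α * ∑ l,
            (if Real.sign (wtilde l) = Real.sign (Rm.transpose.mulVec Vjump l) ∧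
                Real.sign (Rm.transpose.mulVec Vjump l) ≠ 0 then (1 : ℝ) else 0)
              * Rm.transpose.mulVec Vjump l * wtilde l)
    ∧ ∀ (L R' : SWState) (Ftilde : Fin 5 → ℝ),
        vjump g L R' = Vjump →
        ecCondition g Ftilde L R' →
        Vjump ⬝ᵥ (fun k => Ftilde k - (1 / 2) * α *
            Rm.mulVec (fun l =>
              (if Real.sign (wtilde l) = Real.sign (Rm.transpose.mulVec Vjump l) ∧
                  Real.sign (Rm.transpose.mulVec Vjump l) ≠ 0 then (1 : ℝ) else 0) * wtilde l) k)
          - ajump (psi1 g) L R'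
          + ajump Phi L R' * amean (fun U => U.h * U.Bx) L R'
          - g * ajump (fun U => U.h * U.b * U.vx) L R'
          + g * ajump (fun U => U.h * U.vx) L R' * amean (fun U => U.b) L R' ≤ 0 := by
  obtain ⟨hdiss, hstable⟩ := switched_dissipation_entropy_stable_general g α hα Rm Vjump
    (fun l => signSwitch (wtilde l) ((Rmᵀ *ᵥ Vjump) l)) wtilde
    fun l => signSwitch_mul_mul_nonneg (wtilde l) _
  exact ⟨hdiss, by rintro L R' Ftilde rfl; exact hstable L R' Ftilde rfl⟩
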